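/- Let Ω ⊆ ℝ^n be open, let u ∈ C²(Ω) be positive, let r, k ∈ ℝ with k ≠ −1, and let φ ∈ C_c²(Ω) be nonnegative. Then λ₁ ∫_Ω u^{r−2}|∇u|⁴ φ + λ₂ ∫_Ω u^{r−1}|∇u|²(−Δu) φ − ((n−1)/n) ∫_Ω u^r (−Δu)² φ ≤ I₁, where λ₁ = −((n−1)/n)k² + k(r−1) − r(r−1)/2, λ₂ = (3/2)r − ((n+2)/n)k, and I₁ = (1/2)∫_Ω u^r |∇u|² Δφ + ∫_Ω u^r Δu (∇u·∇φ) + (r−k)∫_Ω u^{r−1}|∇u|² (∇u·∇φ). -/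

import Mathlib

open MeasureTheory Real
open scoped InnerProductSpace

/-- The Laplacian of a function `f : ℝⁿ → ℝ`, as the sum of its second partial
derivatives. -/
noncomputable def lap {n : ℕ} (f : EuclideanSpace ℝ (Fin n) → ℝ)
    (x : EuclideanSpace ℝ (Fin n)) : ℝ :=
  ∑ i : Fin n, fderiv ℝ (fun y => fderiv ℝ f y (EuclideanSpace.single i 1)) x
    (EuclideanSpace.single i 1)

/-!
Write `D²u` for the Hessian. For `C¹` vector fields `X`, `Y`, one of them compactly supported,
`∫ div X div Y = ∫ tr (DX DY)`; with `X = u ^ r φ ∇u` and `Y = ∇u` this is the integrated Bochner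
formula. Since `Y` cannot be differentiated again when `u` is only `C²`, the identity is obtained by
moving derivatives across a convolution. Adding suitable multiples of
`∫ div (u ^ r ‖∇u‖ ^ 2 ∇φ) = 0` and `∫ div (u ^ (r - 1) φ ‖∇u‖ ^ 2 ∇u) = 0` turns the difference of
the two sides into the integral of `φ u ^ (r - 2)` times `tr B² - (tr B)² / n`, where
`B = u D²u + k ∇u ⊗ ∇u` is symmetric; this is nonnegative by Cauchy–Schwarz.
-/

section Convolution

open scoped Convolution

variable {E F G H : Type*} [NormedAddCommGroup E] [NormedSpace ℝ E] [NormedAddCommGroup F]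
  [NormedSpace ℝ F] [NormedAddCommGroup G] [NormedSpace ℝ G] [NormedAddCommGroup H]
  [NormedSpace ℝ H] [MeasurableSpace E] [BorelSpace E] {μ : Measure E} [SFinite μ]
  [μ.IsAddLeftInvariant] {f : E → F} {g : E → G}
  (L : F →L[ℝ] G →L[ℝ] H)

lemma fderiv_convolution_right_apply (hf : LocallyIntegrable f μ) (hg : ContDiff ℝ 1 g)
    (hgc : HasCompactSupport g) (x v : E) :
    fderiv ℝ (f ⋆[L, μ] g) x v = (f ⋆[L, μ] fun y ↦ fderiv ℝ g y v) x := by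
  rw [(hgc.hasFDerivAt_convolution_right L hf hg x).fderiv,
    convolution_precompR_apply L hf (hgc.fderiv ℝ) (hg.continuous_fderiv one_ne_zero)]

lemma fderiv_convolution_left_apply [μ.IsNegInvariant] (hf : ContDiff ℝ 1 f)
    (hfc : HasCompactSupport f) (hg : LocallyIntegrable g μ) (x v : E) :
    fderiv ℝ (f ⋆[L, μ] g) x v = ((fun y ↦ fderiv ℝ f y v) ⋆[L, μ] g) x := by
  rw [← convolution_flip, fderiv_convolution_right_apply L.flip hg hf hfc, convolution_flip]

end Convolution

section Cutoff

open scoped Topology ContDiff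

variable {E : Type*} [NormedAddCommGroup E] [NormedSpace ℝ E] [FiniteDimensional ℝ E]

lemma exists_contDiff_cutoff {K U : Set E} (hK : IsCompact K) (hU : IsOpen U) (hKU : K ⊆ U) :
    ∃ χ : E → ℝ, ContDiff ℝ ∞ χ ∧ HasCompactSupport χ ∧ tsupport χ ⊆ U ∧ χ =ᶠ[𝓝ˢ K] 1 ∧
      ∀ x, χ x ∈ Set.Icc 0 1 := by
  obtain ⟨L, hL, hKL, hLU⟩ := exists_compact_between hK hU hKU
  obtain ⟨χ, hχ0, hχ1, hχI⟩ := exists_contMDiffMap_zero_one_nhds_of_isClosed (n := ⊤)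
    (modelWithCornersSelf ℝ E) isOpen_interior.isClosed_compl hK.isClosed
    (Set.disjoint_compl_left_iff_subset.2 hKL)
  have hsupp : tsupport χ ⊆ L := by
    refine closure_minimal (fun x hx ↦ ?_) hL.isClosed
    by_contra hxL
    exact hx (hχ0.self_of_nhdsSet x fun hxi ↦ hxL (interior_subset hxi))
  exact ⟨χ, χ.contMDiff.contDiff, hL.of_isClosed_subset (isClosed_tsupport _) hsupp,
    hsupp.trans hLU, hχ1, hχI⟩

lemma exists_contDiff_pos_eventuallyEq {m : ℕ∞} {K U : Set E} {u : E → ℝ} (hK : IsCompact K)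
    (hU : IsOpen U) (hKU : K ⊆ U) (hu : ContDiffOn ℝ m u U) (hu0 : ∀ x ∈ U, 0 < u x) :
    ∃ w : E → ℝ, ContDiff ℝ m w ∧ (∀ x, 0 < w x) ∧ u =ᶠ[𝓝ˢ K] w := by
  obtain ⟨χ, hχ, -, hχU, hχ1, hχI⟩ := exists_contDiff_cutoff hK hU hKU
  refine ⟨fun x ↦ χ x * (u x - 1) + 1, ?_, fun x ↦ ?_, ?_⟩
  · refine ContDiff.add (contMDiff_of_tsupport fun x hx ↦ ?_).contDiff contDiff_const
    have hxU : x ∈ U := hχU (tsupport_mul_subset_left hx)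
    exact ((hχ.of_le (mod_cast le_top)).contDiffAt.mul
      ((hu.contDiffAt (hU.mem_nhds hxU)).sub contDiffAt_const)).contMDiffAt
  · obtain ⟨h0, h1⟩ := hχI x
    by_cases hx : x ∈ U
    · nlinarith [hu0 x hx, mul_nonneg h0 (hu0 x hx).le]
    · simp [image_eq_zero_of_notMem_tsupport fun h ↦ hx (hχU h)]
  · filter_upwards [hχ1] with x hx
    simp [hx]

end Cutoff

lemma integrableOn_of_continuousOn_of_eq_zero {X : Type*} [TopologicalSpace X] [T2Space X]
    [MeasurableSpace X] [OpensMeasurableSpace X] {ν : Measure X} [IsFiniteMeasureOnCompacts ν]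
    {K U : Set X} {G : X → ℝ} (hK : IsCompact K) (hU : MeasurableSet U) (hKU : K ⊆ U)
    (hG : ContinuousOn G U) (hG0 : ∀ x ∉ K, G x = 0) : IntegrableOn G U ν :=
  ((hG.mono hKU).integrableOn_compact hK).of_forall_sdiff_eq_zero hU fun x hx ↦ hG0 x hx.2

section WeakSymmetry

open scoped Topology ContDiff Convolution

lemma continuous_fderiv_apply_const {E F : Type*} [NormedAddCommGroup E] [NormedSpace ℝ E]
    [NormedAddCommGroup F] [NormedSpace ℝ F] {f : E → F} (hf : ContDiff ℝ 1 f) (v : E) :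
    Continuous fun x ↦ fderiv ℝ f x v :=
  (hf.continuous_fderiv one_ne_zero).clm_apply continuous_const

variable {E : Type*} [NormedAddCommGroup E] [NormedSpace ℝ E] [FiniteDimensional ℝ E]
  [MeasurableSpace E] [BorelSpace E] {μ : Measure E} [μ.IsAddHaarMeasure] {f g : E → ℝ}

-- With `h x = g (-x)`, both sides are `D_v D_w (f ⋆ h)` at `0`, up to sign: a derivative of a
-- convolution may be put on either factor, so neither factor is differentiated twice.
lemma integral_fderiv_mul_fderiv_comm_of_hasCompactSupport (hf : ContDiff ℝ 1 f)
    (hfc : HasCompactSupport f) (hg : ContDiff ℝ 1 g) (hgc : HasCompactSupport g) (v w : E) :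
    ∫ x, fderiv ℝ f x v * fderiv ℝ g x w ∂μ = ∫ x, fderiv ℝ f x w * fderiv ℝ g x v ∂μ := by
  set L := ContinuousLinearMap.mul ℝ ℝ
  set h : E → ℝ := fun x ↦ g (-x)
  have hh : ContDiff ℝ 1 h := hg.comp contDiff_neg
  have hhc : HasCompactSupport h := hgc.comp_homeomorph (.neg E)
  have hmove (a : E) : ((fderiv ℝ f · a) ⋆[L, μ] h) = f ⋆[L, μ] (fderiv ℝ h · a) := by
    funext x
    rw [← fderiv_convolution_left_apply L hf hfc hh.continuous.locallyIntegrable,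
      fderiv_convolution_right_apply L hf.continuous.locallyIntegrable hh hhc]
  have hcomm : ((fderiv ℝ f · v) ⋆[L, μ] (fderiv ℝ h · w)) 0 =
      ((fderiv ℝ f · w) ⋆[L, μ] (fderiv ℝ h · v)) 0 := by
    rw [← fderiv_convolution_right_apply L (continuous_fderiv_apply_const hf v).locallyIntegrable
      hh hhc, hmove, fderiv_convolution_left_apply L hf hfc
      (continuous_fderiv_apply_const hh v).locallyIntegrable]
  have hhg (x a : E) : fderiv ℝ h (0 - x) a = -fderiv ℝ g x a := by
    have := (hg.differentiable one_ne_zero (- -x)).hasFDerivAt.comp (-x)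
      (hasFDerivAt_id (-x)).fun_neg
    simpa [h, Function.comp_def] using congr($(this.fderiv) a)
  simpa only [convolution_def, hhg, L, ContinuousLinearMap.mul_apply', mul_neg, integral_neg,
    neg_inj] using hcomm

lemma integral_fderiv_mul_fderiv_comm (hf : ContDiff ℝ 1 f)
    (hfc : HasCompactSupport f) (hg : ContDiff ℝ 1 g) (v w : E) :
    ∫ x, fderiv ℝ f x v * fderiv ℝ g x w ∂μ = ∫ x, fderiv ℝ f x w * fderiv ℝ g x v ∂μ := by
  obtain ⟨χ, hχ, hχc, -, hχ1, -⟩ := exists_contDiff_cutoff hfc isOpen_univ (Set.subset_univ _)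
  have hcut (a b x : E) :
      fderiv ℝ f x a * fderiv ℝ g x b = fderiv ℝ f x a * fderiv ℝ (χ * g) x b := by
    by_cases hx : x ∈ tsupport f
    · have hχg : χ * g =ᶠ[𝓝 x] g := by
        filter_upwards [eventually_nhdsSet_iff_forall.1 hχ1 x hx] with y hy
        simp [hy]
      rw [hχg.fderiv_eq]
    · simp [fderiv_of_notMem_tsupport ℝ hx]
  simp_rw [hcut]
  exact integral_fderiv_mul_fderiv_comm_of_hasCompactSupport hf hfc
    ((hχ.of_le (mod_cast le_top)).mul hg) hχc.mul_right v w

end WeakSymmetry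

section Trace

open LinearMap (trace)
open InnerProductSpace (rankOne)

variable {E : Type*} [NormedAddCommGroup E] [InnerProductSpace ℝ E] {A : E →L[ℝ] E}

lemma continuous_trace [FiniteDimensional ℝ E] :
    Continuous fun A : E →L[ℝ] E ↦ trace ℝ E A :=
  (trace ℝ E ∘ₗ ContinuousLinearMap.coeLM ℝ).continuous_of_finiteDimensional

lemma trace_mul_eq_sum_sum_inner {ι : Type*} [Fintype ι] (A B : E →L[ℝ] E)
    (b : OrthonormalBasis ι ℝ E) :
    trace ℝ E (A * B : E →L[ℝ] E) = ∑ i, ∑ j, ⟪b i, A (b j)⟫_ℝ * ⟪b j, B (b i)⟫_ℝ := by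
  rw [LinearMap.trace_eq_sum_inner _ b]
  refine Finset.sum_congr rfl fun i _ ↦ ?_
  calc ⟪b i, A (B (b i))⟫_ℝ = ⟪b i, A (∑ j, ⟪b j, B (b i)⟫_ℝ • b j)⟫_ℝ := by rw [b.sum_repr']
    _ = ∑ j, ⟪b i, A (b j)⟫_ℝ * ⟪b j, B (b i)⟫_ℝ := by
      simp [inner_sum, inner_smul_right, mul_comm]

lemma trace_sq_eq_sum_norm_sq {ι : Type*} [Fintype ι] (hA : (A : E →ₗ[ℝ] E).IsSymmetric)
    (b : OrthonormalBasis ι ℝ E) : trace ℝ E (A ^ 2 : E →L[ℝ] E) = ∑ i, ‖A (b i)‖ ^ 2 := by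
  rw [LinearMap.trace_eq_sum_inner _ b]
  refine Finset.sum_congr rfl fun i _ ↦ ?_
  rw [← real_inner_self_eq_norm_sq]
  simpa [pow_two] using (hA (b i) (A (b i))).symm

lemma sq_trace_le_finrank_mul_trace_sq [FiniteDimensional ℝ E]
    (hA : (A : E →ₗ[ℝ] E).IsSymmetric) :
    trace ℝ E A ^ 2 ≤ Module.finrank ℝ E * trace ℝ E (A ^ 2 : E →L[ℝ] E) := by
  set b := stdOrthonormalBasis ℝ E
  rw [LinearMap.trace_eq_sum_inner _ b, trace_sq_eq_sum_norm_sq hA b]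
  calc (∑ i, ⟪b i, A (b i)⟫_ℝ) ^ 2
      ≤ Module.finrank ℝ E * ∑ i, ⟪b i, A (b i)⟫_ℝ ^ 2 := by
        simpa using sq_sum_le_card_mul_sum_sq (s := Finset.univ) (f := fun i ↦ ⟪b i, A (b i)⟫_ℝ)
    _ ≤ Module.finrank ℝ E * ∑ i, ‖A (b i)‖ ^ 2 := by
        gcongr _ * ∑ i, ?_ with i
        simpa [b.norm_eq_one, pow_two] using real_inner_mul_inner_self_le (b i) (A (b i))

lemma trace_add_smul_rankOne_self [FiniteDimensional ℝ E] (A : E →L[ℝ] E) (c : ℝ) (p : E) :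
    trace ℝ E (A + c • rankOne ℝ p p : E →L[ℝ] E) = trace ℝ E A + c * ‖p‖ ^ 2 := by
  simp [InnerProductSpace.trace_rankOne]

lemma trace_sq_add_smul_rankOne_self [FiniteDimensional ℝ E]
    (hA : (A : E →ₗ[ℝ] E).IsSymmetric) (c : ℝ) (p : E) :
    trace ℝ E ((A + c • rankOne ℝ p p) ^ 2 : E →L[ℝ] E) =
      trace ℝ E (A ^ 2 : E →L[ℝ] E) + 2 * c * ⟪A p, p⟫_ℝ + c ^ 2 * ‖p‖ ^ 4 := by
  have hexp : (A + c • rankOne ℝ p p) ^ 2 = A ^ 2 + c • (rankOne ℝ (A p) p + rankOne ℝ p (A p)) +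
      (c ^ 2 * ‖p‖ ^ 2) • rankOne ℝ p p := by
    ext v
    have hv : ⟪p, A v⟫_ℝ = ⟪A p, v⟫_ℝ := (hA p v).symm
    simp only [pow_two, mul_apply_eq_comp, add_apply, smul_apply, smul_add, smul_smul,
      InnerProductSpace.rankOne_apply, map_add, map_smul, real_inner_self_eq_norm_sq, hv]
    module
  rw [hexp]
  simp only [smul_add, ContinuousLinearMap.toLinearMap_add, ContinuousLinearMap.toLinearMap_smul,
    map_add, map_smul, InnerProductSpace.trace_rankOne, smul_eq_mul, real_inner_comm p (A p),
    real_inner_self_eq_norm_sq]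
  ring

lemma sq_trace_add_mul_norm_sq_le [FiniteDimensional ℝ E] (hA : (A : E →ₗ[ℝ] E).IsSymmetric)
    (a c : ℝ) (p : E) :
    (a * trace ℝ E A + c * ‖p‖ ^ 2) ^ 2 ≤ Module.finrank ℝ E *
      (a ^ 2 * trace ℝ E (A ^ 2 : E →L[ℝ] E) + 2 * a * c * ⟪A p, p⟫_ℝ + c ^ 2 * ‖p‖ ^ 4) := by
  have haA : ((a • A : E →L[ℝ] E) : E →ₗ[ℝ] E).IsSymmetric := hA.smul (by simp)
  have hsymm : ((a • A + c • rankOne ℝ p p : E →L[ℝ] E) : E →ₗ[ℝ] E).IsSymmetric :=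
    haA.add ((InnerProductSpace.isSymmetric_rankOne_self p).smul (by simp))
  have := sq_trace_le_finrank_mul_trace_sq hsymm
  rw [trace_add_smul_rankOne_self, trace_sq_add_smul_rankOne_self haA, smul_pow] at this
  simp only [ContinuousLinearMap.toLinearMap_smul, map_smul, smul_eq_mul, smul_apply,
    inner_smul_left, conj_trivial] at this
  exact this.trans_eq (by ring)

end Trace

section Hessian

open InnerProductSpace
open LinearMap (trace)
open scoped Gradient

variable {E : Type*} [NormedAddCommGroup E] [InnerProductSpace ℝ E] [CompleteSpace E]
  {f g : E → ℝ} {x : E}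

/-- The Hessian of `f` at `x`, as the endomorphism that corresponds to the second derivative
under the identification of `E` with its dual. -/
noncomputable def hessian (f : E → ℝ) (x : E) : E →L[ℝ] E :=
  fderiv ℝ (∇ f) x

lemma inner_hessian (f : E → ℝ) (x v w : E) :
    ⟪hessian f x v, w⟫_ℝ = fderiv ℝ (fderiv ℝ f) x v w := by
  have hcomp : fderiv ℝ (∇ f) x = _ := (toDual ℝ E).symm.comp_fderiv (f := fderiv ℝ f)
  rw [hessian, hcomp]
  exact toDual_symm_apply

lemma isSymmetric_hessian (hf : ContDiffAt ℝ 2 f x) :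
    (hessian f x : E →ₗ[ℝ] E).IsSymmetric := fun v w ↦ by
  rw [ContinuousLinearMap.coe_coe, real_inner_comm _ v, inner_hessian, inner_hessian,
    hf.isSymmSndFDerivAt (by simp)]

lemma contDiff_gradient {m n : WithTop ℕ∞} (hf : ContDiff ℝ n f) (hmn : m + 1 ≤ n) :
    ContDiff ℝ m (∇ f) :=
  (toDual ℝ E).symm.contDiff.comp (hf.fderiv_right hmn)

lemma contDiffOn_gradient_of_isOpen {m n : WithTop ℕ∞} {U : Set E} (hf : ContDiffOn ℝ n f U)
    (hU : IsOpen U) (hmn : m + 1 ≤ n) : ContDiffOn ℝ m (∇ f) U :=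
  (toDual ℝ E).symm.contDiff.comp_contDiffOn (hf.fderiv_of_isOpen hU hmn)

lemma hasCompactSupport_gradient (hf : HasCompactSupport f) : HasCompactSupport (∇ f) :=
  (hf.fderiv ℝ).comp_left (map_zero (toDual ℝ E).symm)

lemma gradient_of_notMem_tsupport (hx : x ∉ tsupport f) : ∇ f x = 0 := by
  rw [gradient, fderiv_of_notMem_tsupport ℝ hx, map_zero]

lemma differentiableAt_gradient (hf : ContDiffAt ℝ 2 f x) : DifferentiableAt ℝ (∇ f) x :=
  (toDual ℝ E).symm.differentiableAt.comp x
    ((hf.fderiv_right (m := 1) le_rfl).differentiableAt one_ne_zero)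

lemma hasGradientAt_norm_gradient_sq (hf : ContDiffAt ℝ 2 f x) :
    HasGradientAt (fun y ↦ ‖∇ f y‖ ^ 2) ((2 : ℝ) • hessian f x (∇ f x)) x := by
  rw [hasGradientAt_iff_hasFDerivAt]
  refine (differentiableAt_gradient hf).hasFDerivAt.norm_sq.congr_fderiv ?_
  ext v
  have hsymm : ⟪fderiv ℝ (∇ f) x (∇ f x), v⟫_ℝ = ⟪∇ f x, fderiv ℝ (∇ f) x v⟫_ℝ :=
    isSymmetric_hessian hf (∇ f x) v
  simp [hessian, hsymm]

lemma hasGradientAt_mul {f' g' : E} (hf : HasGradientAt f f' x) (hg : HasGradientAt g g' x) :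
    HasGradientAt (fun y ↦ f y * g y) (f x • g' + g x • f') x := by
  rw [hasGradientAt_iff_hasFDerivAt] at *
  simpa using hf.fun_mul hg

lemma hasGradientAt_rpow_const {f' : E} (hf : HasGradientAt f f' x) (hx : f x ≠ 0) (p : ℝ) :
    HasGradientAt (fun y ↦ f y ^ p) ((p * f x ^ (p - 1)) • f') x := by
  rw [hasGradientAt_iff_hasFDerivAt] at *
  simpa using hf.rpow_const (p := p) (.inl hx)

lemma fderiv_smul_gradient (hf : DifferentiableAt ℝ f x) (hg : ContDiffAt ℝ 2 g x) :
    fderiv ℝ (fun y ↦ f y • ∇ g y) x = f x • hessian g x + rankOne ℝ (∇ g x) (∇ f x) := by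
  rw [fderiv_fun_smul hf (differentiableAt_gradient hg), rankOne_def]
  congr 2
  ext v
  simp

end Hessian

section NullLagrangian

open InnerProductSpace
open LinearMap (trace)
open scoped Gradient Laplacian

variable {E : Type*} [NormedAddCommGroup E] [InnerProductSpace ℝ E] {X Y : E → E} {x : E}

/-- The divergence of a vector field. -/
noncomputable def divergence (X : E → E) (x : E) : ℝ :=
  trace ℝ E (fderiv ℝ X x)

/-- The null Lagrangian `div X div Y - tr (DX DY)` of two vector fields; its integral vanishes
when one of them has compact support. -/
noncomputable def nullLagrangian (X Y : E → E) (x : E) : ℝ :=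
  divergence X x * divergence Y x - trace ℝ E (fderiv ℝ X x * fderiv ℝ Y x : E →L[ℝ] E)

lemma fderiv_inner_const_apply (hX : DifferentiableAt ℝ X x) (v w : E) :
    fderiv ℝ (fun y ↦ ⟪w, X y⟫_ℝ) x v = ⟪w, fderiv ℝ X x v⟫_ℝ := by
  simpa using congr($(((hasFDerivAt_const w x).inner ℝ hX.hasFDerivAt).fderiv) v)

lemma divergence_eq_sum {ι : Type*} [Fintype ι] (b : OrthonormalBasis ι ℝ E)
    (hX : DifferentiableAt ℝ X x) :
    divergence X x = ∑ i, fderiv ℝ (fun y ↦ ⟪b i, X y⟫_ℝ) x (b i) := by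
  simp [divergence, LinearMap.trace_eq_sum_inner _ b, fderiv_inner_const_apply hX]

lemma nullLagrangian_eq_sum_sum {ι : Type*} [Fintype ι] (b : OrthonormalBasis ι ℝ E)
    (hX : DifferentiableAt ℝ X x) (hY : DifferentiableAt ℝ Y x) :
    nullLagrangian X Y x = ∑ i, ∑ j,
      (fderiv ℝ (fun y ↦ ⟪b i, X y⟫_ℝ) x (b i) * fderiv ℝ (fun y ↦ ⟪b j, Y y⟫_ℝ) x (b j) -
        fderiv ℝ (fun y ↦ ⟪b i, X y⟫_ℝ) x (b j) * fderiv ℝ (fun y ↦ ⟪b j, Y y⟫_ℝ) x (b i)) := by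
  rw [nullLagrangian, divergence_eq_sum b hX, divergence_eq_sum b hY,
    trace_mul_eq_sum_sum_inner _ _ b]
  simp only [Finset.sum_sub_distrib, Finset.sum_mul_sum, fderiv_inner_const_apply hX,
    fderiv_inner_const_apply hY]

variable [FiniteDimensional ℝ E] {f g : E → ℝ}

lemma continuous_divergence (hX : ContDiff ℝ 1 X) : Continuous (divergence X) :=
  continuous_trace.comp (hX.continuous_fderiv one_ne_zero)

lemma continuous_nullLagrangian (hX : ContDiff ℝ 1 X) (hY : ContDiff ℝ 1 Y) :
    Continuous (nullLagrangian X Y) :=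
  ((continuous_divergence hX).mul (continuous_divergence hY)).sub
    (continuous_trace.comp
      ((hX.continuous_fderiv one_ne_zero).mul (hY.continuous_fderiv one_ne_zero)))

lemma divergence_gradient (f : E → ℝ) (x : E) : divergence (∇ f) x = Δ f x := by
  rw [divergence, laplacian_eq_iteratedFDeriv_stdOrthonormalBasis,
    LinearMap.trace_eq_sum_inner _ (stdOrthonormalBasis ℝ E)]
  refine Finset.sum_congr rfl fun i _ ↦ ?_
  rw [ContinuousLinearMap.coe_coe, real_inner_comm, ← hessian, inner_hessian,
    iteratedFDeriv_two_apply]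
  simp

lemma laplacian_of_notMem_tsupport (hx : x ∉ tsupport f) : Δ f x = 0 := by
  rw [(laplacian_congr_nhds (notMem_tsupport_iff_eventuallyEq.1 hx)).eq_of_nhds]
  exact congrFun laplacian_const x

lemma continuousOn_laplacian {U : Set E} (hf : ContDiffOn ℝ 2 f U) (hU : IsOpen U) :
    ContinuousOn (Δ f) U :=
  (continuous_trace.comp_continuousOn
    ((contDiffOn_gradient_of_isOpen hf hU le_rfl).continuousOn_fderiv_of_isOpen hU le_rfl)).congr
    fun x _ ↦ (divergence_gradient f x).symm

lemma divergence_smul_gradient (hf : DifferentiableAt ℝ f x) (hg : ContDiffAt ℝ 2 g x) :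
    divergence (fun y ↦ f y • ∇ g y) x = f x * Δ g x + ⟪∇ f x, ∇ g x⟫_ℝ := by
  rw [divergence, fderiv_smul_gradient hf hg]
  simp [← divergence_gradient, divergence, hessian, trace_rankOne]

lemma nullLagrangian_smul_gradient_gradient (hf : DifferentiableAt ℝ f x)
    (hg : ContDiffAt ℝ 2 g x) :
    nullLagrangian (fun y ↦ f y • ∇ g y) (∇ g) x =
      f x * (Δ g x ^ 2 - trace ℝ E (hessian g x ^ 2 : E →L[ℝ] E)) +
        Δ g x * ⟪∇ f x, ∇ g x⟫_ℝ - ⟪∇ f x, hessian g x (∇ g x)⟫_ℝ := by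
  have hcomp : trace ℝ E (rankOne ℝ (∇ g x) (∇ f x) * hessian g x : E →L[ℝ] E) =
      ⟪∇ f x, hessian g x (∇ g x)⟫_ℝ := by
    rw [ContinuousLinearMap.mul_def, rankOne_comp, trace_rankOne,
      ContinuousLinearMap.adjoint_inner_left]
  have htrace : trace ℝ E (fderiv ℝ (fun y ↦ f y • ∇ g y) x * fderiv ℝ (∇ g) x : E →L[ℝ] E) =
      f x * trace ℝ E (hessian g x ^ 2 : E →L[ℝ] E) + ⟪∇ f x, hessian g x (∇ g x)⟫_ℝ := by
    rw [fderiv_smul_gradient hf hg, ← hcomp, hessian, add_mul, smul_mul_assoc, ← pow_two]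
    simp only [ContinuousLinearMap.toLinearMap_add, ContinuousLinearMap.toLinearMap_smul, map_add,
      map_smul, smul_eq_mul]
  rw [nullLagrangian, divergence_smul_gradient hf hg, divergence_gradient, htrace]
  ring

variable [MeasurableSpace E] [BorelSpace E] {μ : Measure E}

lemma integrable_divergence [IsFiniteMeasureOnCompacts μ] (hX : ContDiff ℝ 1 X)
    (hXc : HasCompactSupport X) : Integrable (divergence X) μ :=
  (continuous_divergence hX).integrable_of_hasCompactSupport <| .intro hXc fun x hx ↦ by
    simp [divergence, fderiv_of_notMem_tsupport ℝ hx]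

lemma integrable_nullLagrangian [IsFiniteMeasureOnCompacts μ] (hX : ContDiff ℝ 1 X)
    (hXc : HasCompactSupport X) (hY : ContDiff ℝ 1 Y) : Integrable (nullLagrangian X Y) μ :=
  (continuous_nullLagrangian hX hY).integrable_of_hasCompactSupport <| .intro hXc fun x hx ↦ by
    simp [nullLagrangian, divergence, fderiv_of_notMem_tsupport ℝ hx]

variable [μ.IsAddHaarMeasure]

lemma integral_fderiv_apply_eq_zero {h : E → ℝ} (hh : ContDiff ℝ 1 h) (hhc : HasCompactSupport h)
    (v : E) : ∫ x, fderiv ℝ h x v ∂μ = 0 := by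
  have hint : Integrable (fun x ↦ fderiv ℝ h x v) μ :=
    (continuous_fderiv_apply_const hh v).integrable_of_hasCompactSupport
      (hhc.fderiv_apply ℝ v)
  simpa using integral_mul_fderiv_eq_neg_fderiv_mul_of_integrable (μ := μ) (f := fun _ ↦ (1 : ℝ))
    (g := h) (v := v) (by simp) (by simpa using hint)
    (by simpa using hh.continuous.integrable_of_hasCompactSupport hhc) (by simp)
    fun x _ ↦ hh.differentiable one_ne_zero x

lemma integral_divergence_eq_zero (hX : ContDiff ℝ 1 X) (hXc : HasCompactSupport X) :
    ∫ x, divergence X x ∂μ = 0 := by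
  set b := stdOrthonormalBasis ℝ E
  have hcoord (i) : ContDiff ℝ 1 fun x ↦ ⟪b i, X x⟫_ℝ := contDiff_const.inner ℝ hX
  have hcoordc (i) : HasCompactSupport fun x ↦ ⟪b i, X x⟫_ℝ :=
    hXc.comp_left (inner_zero_right _)
  simp_rw [fun x ↦ divergence_eq_sum b (hX.differentiable one_ne_zero x)]
  rw [integral_finsetSum _ fun i _ ↦ (continuous_fderiv_apply_const (hcoord i)
    _).integrable_of_hasCompactSupport ((hcoordc i).fderiv_apply ℝ _)]
  exact Finset.sum_eq_zero fun i _ ↦ integral_fderiv_apply_eq_zero (hcoord i) (hcoordc i) _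

lemma integral_nullLagrangian_eq_zero (hX : ContDiff ℝ 1 X) (hXc : HasCompactSupport X)
    (hY : ContDiff ℝ 1 Y) : ∫ x, nullLagrangian X Y x ∂μ = 0 := by
  set b := stdOrthonormalBasis ℝ E
  set Xᵢ := fun i y ↦ ⟪b i, X y⟫_ℝ
  set Yᵢ := fun i y ↦ ⟪b i, Y y⟫_ℝ
  have hXᵢ (i) : ContDiff ℝ 1 (Xᵢ i) := contDiff_const.inner ℝ hX
  have hYᵢ (i) : ContDiff ℝ 1 (Yᵢ i) := contDiff_const.inner ℝ hY
  have hXᵢc (i) : HasCompactSupport (Xᵢ i) := hXc.comp_left (inner_zero_right _)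
  have hint (i j v w) : Integrable (fun x ↦ fderiv ℝ (Xᵢ i) x v * fderiv ℝ (Yᵢ j) x w) μ :=
    ((continuous_fderiv_apply_const (hXᵢ i) v).mul
      (continuous_fderiv_apply_const (hYᵢ j) w)).integrable_of_hasCompactSupport
      (((hXᵢc i).fderiv_apply ℝ v).mul_right)
  have hminor (i j) : Integrable (fun x ↦ fderiv ℝ (Xᵢ i) x (b i) * fderiv ℝ (Yᵢ j) x (b j) -
      fderiv ℝ (Xᵢ i) x (b j) * fderiv ℝ (Yᵢ j) x (b i)) μ := (hint i j _ _).sub (hint i j _ _)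
  simp_rw [fun x ↦ nullLagrangian_eq_sum_sum b (hX.differentiable one_ne_zero x)
    (hY.differentiable one_ne_zero x)]
  rw [integral_finsetSum _ fun i _ ↦ integrable_finsetSum _ fun j _ ↦ hminor i j]
  refine Finset.sum_eq_zero fun i _ ↦ ?_
  rw [integral_finsetSum _ fun j _ ↦ hminor i j]
  refine Finset.sum_eq_zero fun j _ ↦ ?_
  rw [integral_sub (hint i j _ _) (hint i j _ _),
    integral_fderiv_mul_fderiv_comm (hXᵢ i) (hXᵢc i) (hYᵢ j), sub_self]

end NullLagrangian

section Obata

open InnerProductSpace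
open LinearMap (trace)
open scoped Gradient Laplacian Topology

variable {E : Type*} [NormedAddCommGroup E] [InnerProductSpace ℝ E] [FiniteDimensional ℝ E]
  {u φ : E → ℝ}

/-- The combination of divergences and null Lagrangians behind the Obata-type inequality. The
coefficients are those for which the terms in `⟪D²u ∇u, ∇φ⟫` cancel and the terms in
`⟪D²u ∇u, ∇u⟫` and `tr (D²u)²` come from a square `tr (u D²u + k ∇u ⊗ ∇u)²`. -/
noncomputable def obataNullIntegrand (r k : ℝ) (u φ : E → ℝ) (x : E) : ℝ :=
  nullLagrangian (fun y ↦ (u y ^ r * φ y) • ∇ u y) (∇ u) x +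
    1 / 2 * divergence (fun y ↦ (u y ^ r * ‖∇ u y‖ ^ 2) • ∇ φ y) x -
    (k - r / 2) * divergence (fun y ↦ (u y ^ (r - 1) * φ y * ‖∇ u y‖ ^ 2) • ∇ u y) x

lemma obataNullIntegrand_congr {w ψ : E → ℝ} {x : E} (hu : u =ᶠ[𝓝 x] w) (hφ : φ =ᶠ[𝓝 x] ψ)
    (r k : ℝ) : obataNullIntegrand r k u φ x = obataNullIntegrand r k w ψ x := by
  have hX : (fun y ↦ (u y ^ r * φ y) • ∇ u y) =ᶠ[𝓝 x] fun y ↦ (w y ^ r * ψ y) • ∇ w y := by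
    filter_upwards [hu, hφ, hu.gradient] with y hy hφy hgy
    rw [hy, hφy, hgy]
  have hY : (fun y ↦ (u y ^ r * ‖∇ u y‖ ^ 2) • ∇ φ y) =ᶠ[𝓝 x]
      fun y ↦ (w y ^ r * ‖∇ w y‖ ^ 2) • ∇ ψ y := by
    filter_upwards [hu, hu.gradient, hφ.gradient] with y hy hgy hgφy
    rw [hy, hgy, hgφy]
  have hZ : (fun y ↦ (u y ^ (r - 1) * φ y * ‖∇ u y‖ ^ 2) • ∇ u y) =ᶠ[𝓝 x]
      fun y ↦ (w y ^ (r - 1) * ψ y * ‖∇ w y‖ ^ 2) • ∇ w y := by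
    filter_upwards [hu, hφ, hu.gradient] with y hy hφy hgy
    rw [hy, hφy, hgy]
  simp only [obataNullIntegrand, nullLagrangian, divergence, hX.fderiv_eq, hY.fderiv_eq,
    hZ.fderiv_eq, hu.gradient.fderiv_eq]

lemma obataNullIntegrand_of_notMem_tsupport {x : E} (hx : x ∉ tsupport φ) (r k : ℝ)
    (u : E → ℝ) : obataNullIntegrand r k u φ x = 0 := by
  rw [obataNullIntegrand_congr .rfl (notMem_tsupport_iff_eventuallyEq.1 hx)]
  simp [obataNullIntegrand, nullLagrangian, divergence, gradient]

lemma obata_pointwise_inequality {n : ℕ} (hn : 0 < n) (hE : Module.finrank ℝ E = n) {x : E}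
    (hu : ContDiffAt ℝ 2 u x) (hu0 : 0 < u x) (hφ : ContDiffAt ℝ 2 φ x) (hφ0 : 0 ≤ φ x)
    (r k : ℝ) :
    (-(((n : ℝ) - 1) / n) * k ^ 2 + k * (r - 1) - r * (r - 1) / 2) *
          (u x ^ (r - 2) * ‖∇ u x‖ ^ 4 * φ x) +
        ((3 / 2) * r - ((n : ℝ) + 2) / n * k) *
          (u x ^ (r - 1) * ‖∇ u x‖ ^ 2 * (-Δ u x) * φ x) -
        ((n : ℝ) - 1) / n * (u x ^ r * (-Δ u x) ^ 2 * φ x) + obataNullIntegrand r k u φ x ≤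
      (1 / 2) * (u x ^ r * ‖∇ u x‖ ^ 2 * Δ φ x) + u x ^ r * Δ u x * ⟪∇ u x, ∇ φ x⟫_ℝ +
        (r - k) * (u x ^ (r - 1) * ‖∇ u x‖ ^ 2 * ⟪∇ u x, ∇ φ x⟫_ℝ) := by
  have hgu := (hu.differentiableAt two_ne_zero).hasGradientAt
  have hgφ := (hφ.differentiableAt two_ne_zero).hasGradientAt
  have hgS := hasGradientAt_norm_gradient_sq hu
  have hgpow := hasGradientAt_rpow_const hgu hu0.ne'
  have hX := hasGradientAt_mul (hgpow r) hgφ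
  have hY := hasGradientAt_mul (hgpow r) hgS
  have hZ := hasGradientAt_mul (hasGradientAt_mul (hgpow (r - 1)) hgφ) hgS
  have hr : u x ^ r = u x ^ (r - 2) * u x ^ 2 := by
    rw [← rpow_add_natCast hu0.ne']; norm_num
  have hr1 : u x ^ (r - 1) = u x ^ (r - 2) * u x := by
    rw [← rpow_add_one hu0.ne']; ring_nf
  have hr2 : r - 1 - 1 = r - 2 := by ring
  have hn0 : (0 : ℝ) < n := mod_cast hn
  have htrace : trace ℝ E (hessian u x) = Δ u x := divergence_gradient u x
  have hsq := sq_trace_add_mul_norm_sq_le (isSymmetric_hessian hu) (u x) k (∇ u x)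
  rw [htrace, hE, ← div_le_iff₀' hn0] at hsq
  -- The two sides differ by exactly `φ u ^ (r - 2)` times the defect in this inequality.
  have hdefect := mul_nonneg (mul_nonneg hφ0 (rpow_nonneg hu0.le (r - 2))) (sub_nonneg.2 hsq)
  rw [obataNullIntegrand, nullLagrangian_smul_gradient_gradient hX.differentiableAt hu,
    divergence_smul_gradient hY.differentiableAt hφ,
    divergence_smul_gradient hZ.differentiableAt hu, hX.gradient, hY.gradient, hZ.gradient]
  refine le_of_sub_nonneg (hdefect.trans_eq ?_)
  simp only [inner_add_left, inner_smul_left, conj_trivial, real_inner_self_eq_norm_sq,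
    real_inner_comm (∇ u x) (∇ φ x), real_inner_comm (hessian u x (∇ u x)) (∇ φ x),
    real_inner_comm (hessian u x (∇ u x)) (∇ u x), hr2, hr, hr1]
  field_simp
  ring

variable [MeasurableSpace E] [BorelSpace E] {μ : Measure E} [μ.IsAddHaarMeasure] {Ω : Set E}

lemma integrable_and_integral_obataNullIntegrand_eq_zero (hu : ContDiff ℝ 2 u)
    (hu0 : ∀ x, 0 < u x) (hφ : ContDiff ℝ 2 φ) (hφc : HasCompactSupport φ) (r k : ℝ) :
    Integrable (obataNullIntegrand r k u φ) μ ∧ ∫ x, obataNullIntegrand r k u φ x ∂μ = 0 := by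
  have hpow (p : ℝ) : ContDiff ℝ 1 fun y ↦ u y ^ p :=
    (hu.rpow_const_of_ne fun x ↦ (hu0 x).ne').of_le one_le_two
  have hφ1 := hφ.of_le one_le_two
  have hgu : ContDiff ℝ 1 (∇ u) := contDiff_gradient hu le_rfl
  have hgφ : ContDiff ℝ 1 (∇ φ) := contDiff_gradient hφ le_rfl
  have hX : ContDiff ℝ 1 fun y ↦ (u y ^ r * φ y) • ∇ u y := ((hpow r).mul hφ1).smul hgu
  have hXc : HasCompactSupport fun y ↦ (u y ^ r * φ y) • ∇ u y := hφc.mul_left.smul_right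
  have hY : ContDiff ℝ 1 fun y ↦ (u y ^ r * ‖∇ u y‖ ^ 2) • ∇ φ y :=
    ((hpow r).mul (hgu.norm_sq ℝ)).smul hgφ
  have hYc : HasCompactSupport fun y ↦ (u y ^ r * ‖∇ u y‖ ^ 2) • ∇ φ y :=
    (hasCompactSupport_gradient hφc).smul_left
  have hZ : ContDiff ℝ 1 fun y ↦ (u y ^ (r - 1) * φ y * ‖∇ u y‖ ^ 2) • ∇ u y :=
    (((hpow (r - 1)).mul hφ1).mul (hgu.norm_sq ℝ)).smul hgu
  have hZc : HasCompactSupport fun y ↦ (u y ^ (r - 1) * φ y * ‖∇ u y‖ ^ 2) • ∇ u y :=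
    hφc.mul_left.mul_right.smul_right
  have hXi := integrable_nullLagrangian (μ := μ) hX hXc hgu
  have hYi := (integrable_divergence (μ := μ) hY hYc).const_mul (1 / 2)
  have hZi := (integrable_divergence (μ := μ) hZ hZc).const_mul (k - r / 2)
  refine ⟨(hXi.add hYi).sub hZi, (integral_sub (hXi.add hYi) hZi).trans ?_⟩
  rw [integral_add' hXi hYi, integral_const_mul, integral_const_mul,
    integral_nullLagrangian_eq_zero hX hXc hgu, integral_divergence_eq_zero hY hYc,
    integral_divergence_eq_zero hZ hZc, mul_zero, mul_zero, add_zero, sub_zero]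

lemma integrableOn_and_setIntegral_obataNullIntegrand_eq_zero (hΩ : IsOpen Ω)
    (hu : ContDiffOn ℝ 2 u Ω) (hu0 : ∀ x ∈ Ω, 0 < u x) (hφ : ContDiff ℝ 2 φ)
    (hφc : HasCompactSupport φ) (hφΩ : tsupport φ ⊆ Ω) (r k : ℝ) :
    IntegrableOn (obataNullIntegrand r k u φ) Ω μ ∧
      ∫ x in Ω, obataNullIntegrand r k u φ x ∂μ = 0 := by
  obtain ⟨w, hw, hw0, huw⟩ := exists_contDiff_pos_eventuallyEq (m := 2) hφc hΩ hφΩ hu hu0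
  have hNuw : obataNullIntegrand r k u φ = obataNullIntegrand r k w φ := by
    funext x
    by_cases hx : x ∈ tsupport φ
    · exact obataNullIntegrand_congr (eventually_nhdsSet_iff_forall.1 huw x hx) .rfl r k
    · simp only [obataNullIntegrand_of_notMem_tsupport hx]
  obtain ⟨hint, hzero⟩ :=
    integrable_and_integral_obataNullIntegrand_eq_zero (μ := μ) hw hw0 hφ hφc r k
  rw [hNuw, setIntegral_eq_integral_of_forall_compl_eq_zero fun x hx ↦
    obataNullIntegrand_of_notMem_tsupport (fun h ↦ hx (hφΩ h)) r k w]
  exact ⟨hint.integrableOn, hzero⟩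

theorem obata_type_inequality_general {n : ℕ} (hn : 0 < n) (hE : Module.finrank ℝ E = n)
    (hΩ : IsOpen Ω) (hu : ContDiffOn ℝ 2 u Ω) (hu0 : ∀ x ∈ Ω, 0 < u x) (r k : ℝ)
    (hφ : ContDiff ℝ 2 φ) (hφc : HasCompactSupport φ) (hφΩ : tsupport φ ⊆ Ω)
    (hφ0 : ∀ x, 0 ≤ φ x) :
    (-(((n : ℝ) - 1) / n) * k ^ 2 + k * (r - 1) - r * (r - 1) / 2) *
          (∫ x in Ω, u x ^ (r - 2) * ‖∇ u x‖ ^ 4 * φ x ∂μ) +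
        ((3 / 2) * r - ((n : ℝ) + 2) / n * k) *
          (∫ x in Ω, u x ^ (r - 1) * ‖∇ u x‖ ^ 2 * (-Δ u x) * φ x ∂μ) -
        ((n : ℝ) - 1) / n * (∫ x in Ω, u x ^ r * (-Δ u x) ^ 2 * φ x ∂μ) ≤
      (1 / 2) * (∫ x in Ω, u x ^ r * ‖∇ u x‖ ^ 2 * Δ φ x ∂μ) +
        (∫ x in Ω, u x ^ r * Δ u x * ⟪∇ u x, ∇ φ x⟫_ℝ ∂μ) +
        (r - k) * (∫ x in Ω, u x ^ (r - 1) * ‖∇ u x‖ ^ 2 * ⟪∇ u x, ∇ φ x⟫_ℝ ∂μ) := by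
  have hpow (p : ℝ) : ContinuousOn (fun y ↦ u y ^ p) Ω :=
    hu.continuousOn.rpow_const fun x hx ↦ .inl (hu0 x hx).ne'
  have hgu := (contDiffOn_gradient_of_isOpen (m := 1) hu hΩ le_rfl).continuousOn
  have hgφ := (contDiff_gradient (m := 1) hφ le_rfl).continuous.continuousOn (s := Ω)
  have hΔu := continuousOn_laplacian hu hΩ
  have hΔφ := continuousOn_laplacian hφ.contDiffOn hΩ
  have hφ' := hφ.continuous.continuousOn (s := Ω)
  have hint {G : E → ℝ} (hG : ContinuousOn G Ω) (hG0 : ∀ x ∉ tsupport φ, G x = 0) :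
      IntegrableOn G Ω μ := integrableOn_of_continuousOn_of_eq_zero hφc hΩ.measurableSet hφΩ hG hG0
  have hI₁ : IntegrableOn (fun x ↦ u x ^ (r - 2) * ‖∇ u x‖ ^ 4 * φ x) Ω μ :=
    hint (by fun_prop) fun x hx ↦ by simp [image_eq_zero_of_notMem_tsupport hx]
  have hI₂ : IntegrableOn (fun x ↦ u x ^ (r - 1) * ‖∇ u x‖ ^ 2 * (-Δ u x) * φ x) Ω μ :=
    hint (by fun_prop) fun x hx ↦ by simp [image_eq_zero_of_notMem_tsupport hx]
  have hI₃ : IntegrableOn (fun x ↦ u x ^ r * (-Δ u x) ^ 2 * φ x) Ω μ :=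
    hint (by fun_prop) fun x hx ↦ by simp [image_eq_zero_of_notMem_tsupport hx]
  have hJ₁ : IntegrableOn (fun x ↦ u x ^ r * ‖∇ u x‖ ^ 2 * Δ φ x) Ω μ :=
    hint (by fun_prop) fun x hx ↦ by simp [laplacian_of_notMem_tsupport hx]
  have hJ₂ : IntegrableOn (fun x ↦ u x ^ r * Δ u x * ⟪∇ u x, ∇ φ x⟫_ℝ) Ω μ :=
    hint (by fun_prop) fun x hx ↦ by simp [gradient_of_notMem_tsupport hx]
  have hJ₃ : IntegrableOn (fun x ↦ u x ^ (r - 1) * ‖∇ u x‖ ^ 2 * ⟪∇ u x, ∇ φ x⟫_ℝ) Ω μ :=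
    hint (by fun_prop) fun x hx ↦ by simp [gradient_of_notMem_tsupport hx]
  obtain ⟨hN, hN0⟩ :=
    integrableOn_and_setIntegral_obataNullIntegrand_eq_zero (μ := μ) hΩ hu hu0 hφ hφc hφΩ r k
  have hI₁₂ := (hI₁.const_mul (-(((n : ℝ) - 1) / n) * k ^ 2 + k * (r - 1) - r * (r - 1) / 2)).add
    (hI₂.const_mul ((3 / 2) * r - ((n : ℝ) + 2) / n * k))
  have hI := hI₁₂.sub (hI₃.const_mul (((n : ℝ) - 1) / n))
  have hJ₁₂ := (hJ₁.const_mul (1 / 2)).add hJ₂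
  have hmono := setIntegral_mono_on (hI.add hN) (hJ₁₂.add (hJ₃.const_mul (r - k)))
    hΩ.measurableSet fun x hx ↦ obata_pointwise_inequality hn hE (hu.contDiffAt (hΩ.mem_nhds hx))
      (hu0 x hx) hφ.contDiffAt (hφ0 x) r k
  rwa [integral_add' hI hN, hN0, add_zero, integral_sub' hI₁₂ (hI₃.const_mul _),
    integral_add' (hI₁.const_mul _) (hI₂.const_mul _), integral_add' hJ₁₂ (hJ₃.const_mul _),
    integral_add' (hJ₁.const_mul _) hJ₂, integral_const_mul, integral_const_mul,
    integral_const_mul, integral_const_mul, integral_const_mul] at hmono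

end Obata

section Coordinates

open InnerProductSpace
open scoped Gradient Laplacian

variable {n : ℕ} {f : EuclideanSpace ℝ (Fin n) → ℝ}

lemma lap_eq_laplacian {x : EuclideanSpace ℝ (Fin n)} (hf : ContDiffAt ℝ 2 f x) :
    lap f x = Δ f x := by
  rw [← divergence_gradient, divergence_eq_sum (EuclideanSpace.basisFun (Fin n) ℝ)
    (differentiableAt_gradient hf), lap]
  simp [inner_gradient_right]

lemma setIntegral_lap_eq {F : Type*} [NormedAddCommGroup F] [NormedSpace ℝ F]
    {μ : Measure (EuclideanSpace ℝ (Fin n))} {U : Set (EuclideanSpace ℝ (Fin n))} (hU : IsOpen U)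
    (hf : ContDiffOn ℝ 2 f U) (G : EuclideanSpace ℝ (Fin n) → ℝ → F) :
    ∫ x in U, G x (lap f x) ∂μ = ∫ x in U, G x (Δ f x) ∂μ :=
  setIntegral_congr_fun hU.measurableSet fun x hx ↦
    congrArg (G x) (lap_eq_laplacian (hf.contDiffAt (hU.mem_nhds hx)))

end Coordinates

theorem obata_type_inequality (n : ℕ) (hn : 0 < n)
    (Ω : Set (EuclideanSpace ℝ (Fin n))) (hΩ : IsOpen Ω)
    (u : EuclideanSpace ℝ (Fin n) → ℝ) (hu : ContDiffOn ℝ 2 u Ω)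
    (hu0 : ∀ x ∈ Ω, 0 < u x) (r k : ℝ) (hk : k ≠ -1)
    (φ : EuclideanSpace ℝ (Fin n) → ℝ) (hφ : ContDiff ℝ 2 φ)
    (hφc : HasCompactSupport φ) (hφΩ : tsupport φ ⊆ Ω) (hφ0 : ∀ x, 0 ≤ φ x) :
    (-(((n : ℝ) - 1) / n) * k ^ 2 + k * (r - 1) - r * (r - 1) / 2) *
        (∫ x in Ω, u x ^ (r - 2) * ‖gradient u x‖ ^ 4 * φ x)
      + ((3 / 2) * r - ((n : ℝ) + 2) / n * k) *
        (∫ x in Ω, u x ^ (r - 1) * ‖gradient u x‖ ^ 2 * (-lap u x) * φ x)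
      - ((n : ℝ) - 1) / n * (∫ x in Ω, u x ^ r * (-lap u x) ^ 2 * φ x)
    ≤ (1 / 2) * (∫ x in Ω, u x ^ r * ‖gradient u x‖ ^ 2 * lap φ x)
      + (∫ x in Ω, u x ^ r * lap u x * ⟪gradient u x, gradient φ x⟫_ℝ)
      + (r - k) *
        (∫ x in Ω, u x ^ (r - 1) * ‖gradient u x‖ ^ 2 *
          ⟪gradient u x, gradient φ x⟫_ℝ) := by
  simp only [lap_eq_laplacian hφ.contDiffAt]
  rw [setIntegral_lap_eq hΩ hu fun x t ↦ u x ^ (r - 1) * ‖gradient u x‖ ^ 2 * (-t) * φ x,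
    setIntegral_lap_eq hΩ hu fun x t ↦ u x ^ r * (-t) ^ 2 * φ x,
    setIntegral_lap_eq hΩ hu fun x t ↦ u x ^ r * t * ⟪gradient u x, gradient φ x⟫_ℝ]
  exact obata_type_inequality_general hn finrank_euclideanSpace_fin hΩ hu hu0 r k hφ hφc hφΩ hφ0
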